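/- Let S ⊆ ℝ^n be a Borel measurable set and let 1 ≤ p < n/(n−1) be real. Set ω₀ = π^{(n−1)/(2p′)} · (Γ(n/2)/Γ(1/2))^{1/p} · Γ((n/p − n + 1)/2) / Γ(n/(2p)). Then ∫_{S^{n-1}} ∫_ℝ ( V_{n-1}(S ∩ (θ^⊥ + tθ)) )^p |t|^{−(n−1)(p−1)} dt d*θ ≤ ω₀^p · V_n(S), the inequality holding in [0,∞]. (Case k = n−1 of the paper's Corollary giving an unweighted-right-hand-side volume estimate for cross-sections: ∫_{A_{n,k}} [V_k(S∩τ)]^p |τ|^{−k(p−1)} dτ ≤ ω_{k,p,0}(n)^p V_n(S) for 1 ≤ p < n/k.) -/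

import Mathlib

open MeasureTheory Metric Real
open scoped ENNReal NNReal

noncomputable section

/-- The normalized (probability) surface measure `d*θ` on the unit sphere of
`EuclideanSpace ℝ (Fin n)`. -/
def sphMeasure (n : ℕ) : Measure (sphere (0 : EuclideanSpace ℝ (Fin n)) 1) :=
  ((volume : Measure (EuclideanSpace ℝ (Fin n))).toSphere Set.univ)⁻¹ •
    (volume : Measure (EuclideanSpace ℝ (Fin n))).toSphere

/-- The hyperplane Radon transform: `Rf(θ,t) = ∫_{θ^⊥} f(tθ + y) dy`, where `θ^⊥` carries its
canonical Lebesgue measure as an (n-1)-dimensional inner product space. -/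
def Radon (n : ℕ) (f : EuclideanSpace ℝ (Fin n) → ℝ≥0∞)
    (θ : sphere (0 : EuclideanSpace ℝ (Fin n)) 1) (t : ℝ) : ℝ≥0∞ :=
  ∫⁻ y : ((ℝ ∙ (θ : EuclideanSpace ℝ (Fin n)))ᗮ),
    f (t • (θ : EuclideanSpace ℝ (Fin n)) + (y : EuclideanSpace ℝ (Fin n)))

/-- `V_{n-1}(S ∩ (θ^⊥ + tθ))`: the (n-1)-dimensional Lebesgue measure, computed in `θ^⊥`,
of the section of `S` by the affine hyperplane `θ^⊥ + tθ`. -/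
def sectVol (n : ℕ) (S : Set (EuclideanSpace ℝ (Fin n)))
    (θ : sphere (0 : EuclideanSpace ℝ (Fin n)) 1) (t : ℝ) : ℝ≥0∞ :=
  volume {y : ((ℝ ∙ (θ : EuclideanSpace ℝ (Fin n)))ᗮ) |
    t • (θ : EuclideanSpace ℝ (Fin n)) + (y : EuclideanSpace ℝ (Fin n)) ∈ S}

section helpers

theorem aux_lint {α : Type*} [MeasurableSpace α] {μ : Measure α} {f : α → ℝ} {c : ℝ}
    (hf : ∀ᵐ x ∂μ, 0 ≤ f x) (hc : 0 < c) (h : ∫ x, f x ∂μ = c) :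
    ∫⁻ x, ENNReal.ofReal (f x) ∂μ = ENNReal.ofReal c := by
  have hi : Integrable f μ := .of_integral_ne_zero (by rw [h]; exact hc.ne')
  rw [← h, ofReal_integral_eq_lintegral_ofReal hi hf]

variable {E : Type*} [NormedAddCommGroup E] [InnerProductSpace ℝ E] [MeasurableSpace E]
  [BorelSpace E] [FiniteDimensional ℝ E]

theorem aux_fubini (e : E) (he : ‖e‖ = 1) (F : E → ℝ≥0∞) (hF : Measurable F) :
    ∫⁻ x, F x = ∫⁻ t : ℝ, ∫⁻ y : ((ℝ ∙ e)ᗮ), F (t • e + (y : E)) := by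
  have h1 := ((ℝ ∙ e).orthogonalDecomposition.symm.measurePreserving).comp
    (WithLp.volume_preserving_toLp (ℝ ∙ e) (ℝ ∙ e)ᗮ)
  have h2 := (LinearIsometryEquiv.toSpanUnitSingleton (𝕜 := ℝ) e he).measurePreserving
  rw [← h1.lintegral_comp hF, Measure.volume_eq_prod, lintegral_prod _ (by
    exact (hF.comp h1.measurable).aemeasurable), ← h2.lintegral_comp]
  · refine lintegral_congr fun t => lintegral_congr fun y => ?_
    simp [LinearIsometryEquiv.toSpanUnitSingleton]
  · exact Measurable.lintegral_prod_right' (hF.comp h1.measurable)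

theorem aux_polar [Nontrivial E] (F : E → ℝ≥0∞) (hF : Measurable F) :
    ∫⁻ x, F x = ∫⁻ θ, (∫⁻ r in Set.Ioi (0 : ℝ),
      ENNReal.ofReal (r ^ (Module.finrank ℝ E - 1)) * F (r • (θ : E)))
        ∂(volume : Measure E).toSphere := by
  have h1 := (volume : Measure E).measurePreserving_homeomorphUnitSphereProd
  calc ∫⁻ x, F x = ∫⁻ x : ({(0)}ᶜ : Set E), F x ∂((volume : Measure E).comap Subtype.val) := by
        rw [lintegral_subtype_comap (measurableSet_singleton _).compl,
          restrict_compl_singleton]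
    _ = ∫⁻ z, F (z.2.1 • (z.1 : E)) ∂((volume : Measure E).toSphere.prod
          (.volumeIoiPow (Module.finrank ℝ E - 1))) := by
        rw [← h1.lintegral_comp (by fun_prop)]
        refine lintegral_congr fun x => ?_
        have hx : ‖(x : E)‖ ≠ 0 := norm_ne_zero_iff.2 x.2
        simp [smul_smul, hx]
    _ = _ := by
        rw [lintegral_prod _ (by fun_prop)]
        refine lintegral_congr fun θ => ?_
        rw [Measure.volumeIoiPow, lintegral_withDensity_eq_lintegral_mul _ (by fun_prop)
          (by fun_prop)]
        exact lintegral_subtype_comap measurableSet_Ioi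
          (fun r : ℝ => ENNReal.ofReal (r ^ (Module.finrank ℝ E - 1)) * F (r • (θ : E)))

theorem aux_rad (b : ℝ) (hb : 0 < b) :
    ∫⁻ v : E, ENNReal.ofReal (rexp (-b * ‖v‖ ^ 2)) =
      ENNReal.ofReal ((π / b) ^ (Module.finrank ℝ E / 2 : ℝ)) :=
  aux_lint (.of_forall fun _ => (exp_pos _).le) (by positivity)
    (GaussianFourier.integral_rexp_neg_mul_sq_norm hb)

theorem aux_half (c : ℝ) (hc : 0 < c) :
    ∫⁻ r in Set.Ioi (0 : ℝ), ENNReal.ofReal (r ^ (c - 1) * rexp (-r ^ 2)) =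
      ENNReal.ofReal (Real.Gamma (c / 2) / 2) := by
  refine aux_lint ?_ (by have := Gamma_pos_of_pos (half_pos hc); positivity) ?_
  · filter_upwards [ae_restrict_mem measurableSet_Ioi] with r hr
    have : (0:ℝ) < r := hr
    positivity
  · have := integral_rpow_mul_exp_neg_rpow (p := 2) (q := c - 1) two_pos (by linarith)
    simp only [rpow_two] at this
    rw [this]; ring_nf

theorem aux_line (a : ℝ) (ha : a < 1) :
    ∫⁻ t : ℝ, ENNReal.ofReal |t| ^ (-a) * ENNReal.ofReal (rexp (-t ^ 2)) =
      ENNReal.ofReal (Real.Gamma ((1 - a) / 2)) := by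
  have h1 : ∫⁻ t : ℝ, ENNReal.ofReal |t| ^ (-a) * ENNReal.ofReal (rexp (-t ^ 2)) =
      ∫⁻ t : ℝ, ENNReal.ofReal (|t| ^ (-a) * rexp (-|t| ^ 2)) := by
    refine lintegral_congr_ae ?_
    filter_upwards [Measure.ae_ne volume (0:ℝ)] with t ht
    rw [ENNReal.ofReal_rpow_of_pos (abs_pos.2 ht), ← ENNReal.ofReal_mul (by positivity), sq_abs]
  rw [h1]
  refine aux_lint (.of_forall fun _ => by positivity)
    (Gamma_pos_of_pos (by linarith)) ?_
  rw [integral_comp_abs (f := fun t => t ^ (-a) * rexp (-t ^ 2))]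
  have := integral_rpow_mul_exp_neg_rpow (p := 2) (q := -a) two_pos (by linarith)
  simp only [rpow_two] at this
  rw [this]; ring_nf

theorem aux_beta (s T : ℝ) (hs : (Module.finrank ℝ E / 2 : ℝ) < s) (hT : 0 < T) :
    ∫⁻ y : E, ENNReal.ofReal ((T + ‖y‖ ^ 2) ^ (-s)) =
      ENNReal.ofReal (π ^ (Module.finrank ℝ E / 2 : ℝ) *
        Real.Gamma (s - Module.finrank ℝ E / 2) / Real.Gamma s *
          T ^ (-(s - Module.finrank ℝ E / 2))) := by
  set d : ℝ := Module.finrank ℝ E / 2 with hd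
  have hd0 : 0 ≤ d := by positivity
  have hs0 : 0 < s := by linarith
  have hG := Gamma_pos_of_pos hs0
  have hG' := Gamma_pos_of_pos (sub_pos.2 hs)
  have key : ∀ (a r : ℝ), 0 < a → 0 < r →
      ∫⁻ u in Set.Ioi (0:ℝ), ENNReal.ofReal (u ^ (a - 1) * rexp (-(r * u))) =
        ENNReal.ofReal (r ^ (-a) * Real.Gamma a) := by
    intro a r ha hr
    have := Gamma_pos_of_pos ha
    refine aux_lint ?_ (by positivity) ?_
    · filter_upwards [ae_restrict_mem measurableSet_Ioi] with r hr
      have : (0:ℝ) < r := hr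
      positivity
    · rw [integral_rpow_mul_exp_neg_mul_Ioi ha hr, one_div, inv_rpow hr.le, rpow_neg hr.le]
  have h1 : ENNReal.ofReal (Real.Gamma s) * ∫⁻ y : E, ENNReal.ofReal ((T + ‖y‖ ^ 2) ^ (-s)) =
      ENNReal.ofReal (π ^ d * (T ^ (-(s - d)) * Real.Gamma (s - d))) := by
    calc _ = ∫⁻ y : E, ∫⁻ u in Set.Ioi (0:ℝ),
          ENNReal.ofReal (u ^ (s - 1) * rexp (-((T + ‖y‖ ^ 2) * u))) := by
          rw [← lintegral_const_mul _ (by fun_prop)]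
          refine lintegral_congr fun y => ?_
          rw [key _ _ hs0 (by positivity), ← ENNReal.ofReal_mul hG.le, mul_comm]
      _ = ∫⁻ u in Set.Ioi (0:ℝ), ∫⁻ y : E,
          ENNReal.ofReal (u ^ (s - 1) * rexp (-((T + ‖y‖ ^ 2) * u))) := by
          rw [lintegral_lintegral_swap]
          fun_prop
      _ = ∫⁻ u in Set.Ioi (0:ℝ), ENNReal.ofReal (π ^ d) *
            ENNReal.ofReal (u ^ ((s - d) - 1) * rexp (-(T * u))) := by
          refine setLIntegral_congr_fun measurableSet_Ioi fun u hu => ?_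
          have hu : (0:ℝ) < u := hu
          have : ∀ y : E, ENNReal.ofReal (u ^ (s - 1) * rexp (-((T + ‖y‖ ^ 2) * u))) =
              ENNReal.ofReal (u ^ (s - 1) * rexp (-(T * u))) *
                ENNReal.ofReal (rexp (-u * ‖y‖ ^ 2)) := by
            intro y
            rw [← ENNReal.ofReal_mul (by positivity), mul_assoc, ← Real.exp_add]
            ring_nf
          simp only [this]
          rw [lintegral_const_mul _ (by fun_prop), aux_rad u hu,
            ← ENNReal.ofReal_mul (by positivity), ← ENNReal.ofReal_mul (by positivity), ← hd,
            div_rpow pi_pos.le hu.le, show s - d - 1 = (s - 1) - d by ring, rpow_sub hu (s - 1) d]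
          congr 1
          ring
      _ = _ := by
          rw [lintegral_const_mul _ (by fun_prop), key _ _ (sub_pos.2 hs) hT,
            ← ENNReal.ofReal_mul (by positivity)]
  rw [← ENNReal.mul_right_inj (a := ENNReal.ofReal (Real.Gamma s)) (by simpa using hG) (by simp), h1, ← ENNReal.ofReal_mul hG.le]
  congr 1
  field_simp

theorem aux_sphere [Nontrivial E] (m : ℕ) (hm : Module.finrank ℝ E = m + 1) (a : ℝ) (ha : a < 1)
    (x : E) (hx : x ≠ 0) :
    ∫⁻ θ, ENNReal.ofReal |inner ℝ x (θ : E)| ^ (-a) ∂(volume : Measure E).toSphere =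
      ENNReal.ofReal ‖x‖ ^ (-a) *
        ENNReal.ofReal (2 * π ^ (m / 2 : ℝ) * Real.Gamma ((1 - a) / 2) /
          Real.Gamma ((m + 1 - a) / 2)) := by
  have hx0 : 0 < ‖x‖ := norm_pos_iff.2 hx
  have hG : 0 < Real.Gamma ((m + 1 - a) / 2) := Gamma_pos_of_pos (by
    have : (0:ℝ) ≤ m := by positivity
    linarith)
  have hG1 : 0 < Real.Gamma ((1 - a) / 2) := Gamma_pos_of_pos (by linarith)
  set e : E := ‖x‖⁻¹ • x with he
  have he1 : ‖e‖ = 1 := by rw [he, norm_smul, norm_inv, norm_norm]; field_simp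
  have hxe : x = ‖x‖ • e := by rw [he, smul_smul, mul_inv_cancel₀ hx0.ne', one_smul]
  let F : E → ℝ≥0∞ := fun v => ENNReal.ofReal |inner ℝ x v| ^ (-a) *
    ENNReal.ofReal (rexp (-‖v‖ ^ 2))
  have hF : Measurable F := by fun_prop
  have A := aux_polar F hF
  have B := aux_fubini e he1 F hF
  have hA : ∫⁻ v, F v = (∫⁻ θ, ENNReal.ofReal |inner ℝ x (θ : E)| ^ (-a)
      ∂(volume : Measure E).toSphere) * ENNReal.ofReal (Real.Gamma ((m + 1 - a) / 2) / 2) := by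
    rw [A, ← lintegral_mul_const _ (by fun_prop)]
    refine lintegral_congr fun θ => ?_
    rw [← aux_half (m + 1 - a) (by have : (0:ℝ) ≤ m := by positivity
                                   linarith), ← lintegral_const_mul _ (by fun_prop)]
    refine setLIntegral_congr_fun measurableSet_Ioi fun r hr => ?_
    have hr : (0:ℝ) < r := hr
    simp only [F]
    have hθ : ‖(θ : E)‖ = 1 := by simp
    rw [inner_smul_right, norm_smul, hθ, mul_one, norm_eq_abs, sq_abs, abs_mul, abs_of_pos hr,
      ENNReal.ofReal_mul hr.le, ENNReal.mul_rpow_of_ne_top (by simp) (by simp),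
      ENNReal.ofReal_mul (by positivity), show (m:ℝ) + 1 - a - 1 = m + (-a) by ring,
      rpow_add hr, ENNReal.ofReal_mul (by positivity), ENNReal.ofReal_rpow_of_pos hr, hm,
      rpow_natCast]
    simp only [Nat.add_sub_cancel]
    ring
  have hfr : Module.finrank ℝ ((ℝ ∙ e)ᗮ) = m := by
    have : Fact (Module.finrank ℝ E = m + 1) := ⟨hm⟩
    exact Submodule.finrank_orthogonal_span_singleton (by
      intro h; simp [h] at he1)
  have hB : ∫⁻ v, F v = ENNReal.ofReal ‖x‖ ^ (-a) * ENNReal.ofReal (Real.Gamma ((1 - a) / 2)) *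
      ENNReal.ofReal (π ^ (m / 2 : ℝ)) := by
    rw [B, ← aux_line a ha, ← lintegral_const_mul _ (by fun_prop),
      ← lintegral_mul_const _ (by fun_prop)]
    refine lintegral_congr fun t => ?_
    have h1 := aux_rad (E := ((ℝ ∙ e)ᗮ)) 1 one_pos
    rw [hfr, div_one] at h1
    rw [← h1, ← lintegral_const_mul _ (by fun_prop)]
    refine lintegral_congr fun y => ?_
    have hy : inner ℝ e (y : E) = 0 := Submodule.mem_orthogonal_singleton_iff_inner_right.1 y.2
    have hn : ‖t • e + (y : E)‖ ^ 2 = t ^ 2 + ‖y‖ ^ 2 := by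
      rw [norm_add_sq_real, inner_smul_left, hy, norm_smul, he1]
      simp
    have hi : inner ℝ x (t • e + (y : E)) = ‖x‖ * t := by
      conv_lhs => rw [hxe]
      rw [inner_smul_left, inner_add_right, inner_smul_right, hy, real_inner_self_eq_norm_sq, he1]
      simp
    simp only [F]
    rw [hn, hi, abs_mul, abs_norm, ENNReal.ofReal_mul hx0.le,
      ENNReal.mul_rpow_of_ne_top (by simp) (by simp), neg_add, Real.exp_add,
      ENNReal.ofReal_mul (exp_pos _).le, neg_one_mul]
    ring
  have hne : ENNReal.ofReal (Real.Gamma ((m + 1 - a) / 2) / 2) ≠ 0 := by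
    simpa using hG
  rw [← ENNReal.mul_left_inj hne (by simp), ← hA, hB, mul_assoc, mul_assoc,
    ← ENNReal.ofReal_mul hG1.le, ← ENNReal.ofReal_mul (by positivity)]
  congr 2
  field_simp

end helpers

theorem aux_point (m : ℕ) (S : Set (EuclideanSpace ℝ (Fin (m + 1)))) (hS : MeasurableSet S)
    (p : ℝ) (hp : 1 ≤ p) (hp' : (m : ℝ) < (m + 1) / p)
    (θ : sphere (0 : EuclideanSpace ℝ (Fin (m + 1))) 1) (t : ℝ) (ht : t ≠ 0) :
    sectVol (m + 1) S θ t ^ p * ENNReal.ofReal |t| ^ (-(m : ℝ) * (p - 1)) ≤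
      ENNReal.ofReal (π ^ (m / 2 : ℝ) * Real.Gamma ((m + 1) / (2 * p) - m / 2) /
          Real.Gamma ((m + 1) / (2 * p))) ^ (p - 1) *
        ∫⁻ y : ((ℝ ∙ (θ : EuclideanSpace ℝ (Fin (m + 1))))ᗮ),
          (fun x : EuclideanSpace ℝ (Fin (m + 1)) => S.indicator 1 x *
            ENNReal.ofReal ‖x‖ ^ ((m + 1 : ℝ) - (m + 1) / p) *
            ENNReal.ofReal |inner ℝ x (θ : EuclideanSpace ℝ (Fin (m + 1)))| ^
              (-((m + 1 : ℝ) - (m + 1) / p)))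
            (t • (θ : EuclideanSpace ℝ (Fin (m + 1))) + (y : EuclideanSpace ℝ (Fin (m + 1)))) := by
  set e : EuclideanSpace ℝ (Fin (m + 1)) := (θ : EuclideanSpace ℝ (Fin (m + 1))) with he
  have he1 : ‖e‖ = 1 := by simp [he]
  have hp0 : 0 < p := by linarith
  set a : ℝ := (m + 1 : ℝ) - (m + 1) / p with ha
  set s : ℝ := (m + 1) / (2 * p) with hs
  have h2s : (m + 1 : ℝ) / p = 2 * s := by rw [hs]; field_simp
  have hsm : (m / 2 : ℝ) < s := by rw [h2s] at hp'; linarith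
  have hm0 : (0:ℝ) ≤ m := by positivity
  set C : ℝ := π ^ (m / 2 : ℝ) * Real.Gamma (s - m / 2) / Real.Gamma s with hC
  have hG1 := Gamma_pos_of_pos (sub_pos.2 hsm)
  have hG2 : 0 < Real.Gamma s := Gamma_pos_of_pos (by linarith)
  have hC0 : 0 < C := by positivity
  have hfr : Module.finrank ℝ ((ℝ ∙ e)ᗮ) = m := by
    have : Fact (Module.finrank ℝ (EuclideanSpace ℝ (Fin (m + 1))) = m + 1) := ⟨by simp⟩
    exact Submodule.finrank_orthogonal_span_singleton (by
      intro h; simp [h] at he1)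
  have hta : 0 < |t| := abs_pos.2 ht
  have hn : ∀ y : ((ℝ ∙ e)ᗮ), ‖t • e + (y : EuclideanSpace ℝ (Fin (m + 1)))‖ ^ 2 =
      t ^ 2 + ‖y‖ ^ 2 := by
    intro y
    have hy : inner ℝ e (y : EuclideanSpace ℝ (Fin (m + 1))) = 0 :=
      Submodule.mem_orthogonal_singleton_iff_inner_right.1 y.2
    rw [norm_add_sq_real, inner_smul_left, hy, norm_smul, he1]
    simp
  have hi : ∀ y : ((ℝ ∙ e)ᗮ), inner ℝ (t • e + (y : EuclideanSpace ℝ (Fin (m + 1)))) e = t := by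
    intro y
    have hy : inner ℝ (y : EuclideanSpace ℝ (Fin (m + 1))) e = 0 :=
      Submodule.mem_orthogonal_singleton_iff_inner_left.1 y.2
    rw [inner_add_left, inner_smul_left, hy, real_inner_self_eq_norm_sq, he1]
    simp
  have hpos : ∀ y : ((ℝ ∙ e)ᗮ), 0 < ‖t • e + (y : EuclideanSpace ℝ (Fin (m + 1)))‖ := by
    intro y
    have h1 : 0 < ‖t • e + (y : EuclideanSpace ℝ (Fin (m + 1)))‖ ^ 2 := by
      rw [hn]; positivity
    exact lt_of_le_of_ne (norm_nonneg _) fun h => by simp [← h] at h1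
  have hsub : Measurable (fun y : ((ℝ ∙ e)ᗮ) => t • e + (y : EuclideanSpace ℝ (Fin (m + 1)))) := by
    fun_prop
  let f : ((ℝ ∙ e)ᗮ) → ℝ≥0∞ := fun y =>
    S.indicator 1 (t • e + (y : EuclideanSpace ℝ (Fin (m + 1)))) *
      ENNReal.ofReal ‖t • e + (y : EuclideanSpace ℝ (Fin (m + 1)))‖ ^ a
  let g : ((ℝ ∙ e)ᗮ) → ℝ≥0∞ := fun y => ENNReal.ofReal ((t ^ 2 + ‖y‖ ^ 2) ^ (-s))
  have hind : Measurable (fun y : ((ℝ ∙ e)ᗮ) =>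
      S.indicator (1 : EuclideanSpace ℝ (Fin (m + 1)) → ℝ≥0∞) (t • e + (y : EuclideanSpace ℝ (Fin (m + 1))))) :=
    (measurable_one.indicator hS).comp hsub
  have hf : Measurable f := by
    refine hind.mul ?_
    fun_prop
  have hg : Measurable g := by fun_prop
  have hsv : sectVol (m + 1) S θ t = ∫⁻ y, f y ^ (1 / p) * g y ^ (1 - 1 / p) := by
    have : sectVol (m + 1) S θ t = ∫⁻ y : ((ℝ ∙ e)ᗮ),
        S.indicator (1 : EuclideanSpace ℝ (Fin (m + 1)) → ℝ≥0∞) (t • e + (y : EuclideanSpace ℝ (Fin (m + 1)))) := by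
      exact (lintegral_indicator_one (μ := volume) (hsub hS)).symm
    rw [this]
    refine lintegral_congr fun y => ?_
    simp only [f, g]
    by_cases hy : t • e + (y : EuclideanSpace ℝ (Fin (m + 1))) ∈ S
    · rw [Set.indicator_of_mem hy, Pi.one_apply, one_mul, ← hn,
        ← rpow_natCast, ← rpow_mul (norm_nonneg _), ← ENNReal.ofReal_rpow_of_pos (hpos y),
        ← ENNReal.rpow_mul, ← ENNReal.rpow_mul, ← ENNReal.rpow_add _ _ (by simpa using hpos y)
          (by simp)]
      have : a * (1 / p) + ((2:ℕ):ℝ) * -s * (1 - 1 / p) = 0 := by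
        rw [ha, hs]; push_cast; field_simp; ring
      rw [this, ENNReal.rpow_zero]
    · rw [Set.indicator_of_notMem hy, zero_mul, ENNReal.zero_rpow_of_pos (by positivity), zero_mul]
  have hp1 : 1 / p ≤ 1 := by rw [div_le_one hp0]; exact hp
  have hold := ENNReal.lintegral_mul_norm_pow_le (μ := volume) hf.aemeasurable hg.aemeasurable
    (p := 1 / p) (q := 1 - 1 / p) (by positivity) (by linarith) (by ring)
  rw [← hsv] at hold
  have hold2 := ENNReal.rpow_le_rpow hold hp0.le
  rw [ENNReal.mul_rpow_of_nonneg _ _ hp0.le, ← ENNReal.rpow_mul, ← ENNReal.rpow_mul,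
    one_div_mul_cancel hp0.ne', ENNReal.rpow_one,
    show (1 - 1 / p) * p = p - 1 by field_simp] at hold2
  have hgi : ∫⁻ y, g y = ENNReal.ofReal C * ENNReal.ofReal |t| ^ (-(2 * s - m)) := by
    have := aux_beta (E := ((ℝ ∙ e)ᗮ)) s (t ^ 2) (by rw [hfr]; exact hsm) (by positivity)
    rw [hfr] at this
    rw [this, ENNReal.ofReal_mul hC0.le, ENNReal.ofReal_rpow_of_pos hta, ← sq_abs,
      ← rpow_natCast, ← rpow_mul hta.le]
    congr 3
    push_cast; ring
  have hgi2 : (∫⁻ y, g y) ^ (p - 1) * ENNReal.ofReal |t| ^ (-(m : ℝ) * (p - 1)) =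
      ENNReal.ofReal C ^ (p - 1) * ENNReal.ofReal |t| ^ (-a) := by
    rw [hgi, ENNReal.mul_rpow_of_nonneg _ _ (by linarith), mul_assoc, ← ENNReal.rpow_mul,
      ← ENNReal.rpow_add _ _ (by simpa using ht) (by simp)]
    congr 2
    rw [ha, hs]; field_simp; ring
  calc _ ≤ (∫⁻ y, f y) * (∫⁻ y, g y) ^ (p - 1) * ENNReal.ofReal |t| ^ (-(m : ℝ) * (p - 1)) := by
        gcongr
    _ = ENNReal.ofReal C ^ (p - 1) * ((∫⁻ y, f y) * ENNReal.ofReal |t| ^ (-a)) := by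
        rw [mul_assoc, hgi2]; ring
    _ = _ := by
        rw [← lintegral_mul_const _ hf]
        congr 1
        refine lintegral_congr fun y => ?_
        simp only [f, hi]



/-- Unweighted-right-hand-side volume estimate for hyperplane cross-sections
(case `k = n-1`, `μ = 0` of the weighted estimate): for `1 ≤ p < n/(n-1)`,
`∫∫ V_{n-1}(S ∩ (θ^⊥+tθ))^p |t|^{-(n-1)(p-1)} dt d*θ ≤ ω₀^p V_n(S)`. -/
theorem stmt19 (n : ℕ) (hn : 2 ≤ n) (S : Set (EuclideanSpace ℝ (Fin n)))
    (hS : MeasurableSet S) (p : ℝ) (hp : 1 ≤ p) (hp' : p < (n : ℝ) / ((n : ℝ) - 1)) (ω₀ : ℝ)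
    (hω : ω₀ = Real.pi ^ (((n : ℝ) - 1) * (1 - 1 / p) / 2) *
      (Real.Gamma ((n : ℝ) / 2) / Real.Gamma (1 / 2)) ^ (1 / p) *
      Real.Gamma (((n : ℝ) / p - n + 1) / 2) / Real.Gamma ((n : ℝ) / (2 * p))) :
    (∫⁻ θ, ∫⁻ t : ℝ, sectVol n S θ t ^ p *
        ENNReal.ofReal |t| ^ (-((n : ℝ) - 1) * (p - 1)) ∂volume ∂(sphMeasure n)) ≤
      ENNReal.ofReal ω₀ ^ p * volume S := by
  obtain ⟨m, rfl⟩ : ∃ m, n = m + 1 := ⟨n - 1, by omega⟩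
  have hm0 : (0:ℝ) < m := by
    have : 0 < m := by omega
    exact_mod_cast this
  have hp0 : 0 < p := by linarith
  have hm1 : ((m + 1 : ℕ) : ℝ) = m + 1 := by push_cast; ring
  rw [hm1] at hp' hω ⊢
  simp only [add_sub_cancel_right] at hp' hω ⊢
  have hpm : (m : ℝ) < (m + 1) / p := by
    rw [lt_div_iff₀ hm0] at hp'
    rw [lt_div_iff₀ hp0]; linarith
  set a : ℝ := (m + 1 : ℝ) - (m + 1) / p with ha
  set s : ℝ := (m + 1) / (2 * p) with hs
  have h2s : (m + 1 : ℝ) / p = 2 * s := by rw [hs]; field_simp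
  have hsm : (m / 2 : ℝ) < s := by rw [h2s] at hpm; linarith
  have ha1 : a < 1 := by rw [ha]; linarith
  set C : ℝ := π ^ (m / 2 : ℝ) * Real.Gamma (s - m / 2) / Real.Gamma s with hC
  have hG1 := Gamma_pos_of_pos (sub_pos.2 hsm)
  have hG2 : 0 < Real.Gamma s := Gamma_pos_of_pos (by linarith)
  have hG3 : 0 < Real.Gamma (1 / 2) := Gamma_pos_of_pos (by norm_num)
  have hG4 : 0 < Real.Gamma ((m + 1) / 2) := Gamma_pos_of_pos (by positivity)
  have hC0 : 0 < C := by positivity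
  let G : EuclideanSpace ℝ (Fin (m + 1)) → EuclideanSpace ℝ (Fin (m + 1)) → ℝ≥0∞ :=
    fun θ x => S.indicator 1 x * ENNReal.ofReal ‖x‖ ^ a * ENNReal.ofReal |inner ℝ x θ| ^ (-a)
  have hGm : Measurable (Function.uncurry G) := by
    have h1 : Measurable (fun z : EuclideanSpace ℝ (Fin (m + 1)) × EuclideanSpace ℝ (Fin (m + 1)) =>
        S.indicator (1 : EuclideanSpace ℝ (Fin (m + 1)) → ℝ≥0∞) z.2) := (measurable_one.indicator hS).comp measurable_snd
    exact (h1.mul (by fun_prop)).mul (by fun_prop)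
  have hfin : Module.finrank ℝ (EuclideanSpace ℝ (Fin (m + 1))) = m + 1 := by simp
  set σ := (volume : Measure (EuclideanSpace ℝ (Fin (m + 1)))).toSphere with hσ
  have hσu : σ Set.univ = ENNReal.ofReal (2 * π ^ (m / 2 : ℝ) * Real.Gamma (1 / 2) /
          Real.Gamma ((m + 1) / 2)) := by
    obtain ⟨x, hx⟩ := exists_ne (0 : EuclideanSpace ℝ (Fin (m + 1)))
    have := aux_sphere m hfin 0 one_pos x hx
    simpa only [neg_zero, ENNReal.rpow_zero, lintegral_one, one_mul, sub_zero] using this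
  -- Step 1: pointwise estimate and slicing
  have step1 : ∀ θ : sphere (0 : EuclideanSpace ℝ (Fin (m + 1))) 1,
      ∫⁻ t : ℝ, sectVol (m + 1) S θ t ^ p * ENNReal.ofReal |t| ^ (-(m : ℝ) * (p - 1)) ≤
        ENNReal.ofReal C ^ (p - 1) * ∫⁻ x, G θ x := by
    intro θ
    have hGθ : Measurable (G θ) := hGm.comp (by fun_prop : Measurable fun x =>
      ((θ : EuclideanSpace ℝ (Fin (m + 1))), x))
    rw [aux_fubini (θ : EuclideanSpace ℝ (Fin (m + 1))) (by simp) (G θ) hGθ,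
      ← lintegral_const_mul' _ _ (ENNReal.rpow_ne_top_of_nonneg (by linarith) (by simp))]
    refine lintegral_mono_ae ?_
    filter_upwards [Measure.ae_ne volume (0:ℝ)] with t ht
    exact aux_point m S hS p hp hpm θ t ht
  -- Step 2: integrate over the sphere
  have step2 : ∫⁻ θ : sphere (0 : EuclideanSpace ℝ (Fin (m + 1))) 1, ∫⁻ x, G θ x ∂volume ∂σ =
      ENNReal.ofReal (2 * π ^ (m / 2 : ℝ) * Real.Gamma ((1 - a) / 2) /
          Real.Gamma ((m + 1 - a) / 2)) * volume S := by
    rw [lintegral_lintegral_swap]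
    · rw [← lintegral_indicator_one hS, ← lintegral_const_mul _ (measurable_one.indicator hS)]
      refine lintegral_congr_ae ?_
      filter_upwards [Measure.ae_ne volume (0 : EuclideanSpace ℝ (Fin (m + 1)))] with x hx
      simp only [G]
      have hx0 : 0 < ‖x‖ := norm_pos_iff.2 hx
      rw [lintegral_const_mul _ (by fun_prop), aux_sphere m hfin a ha1 x hx, mul_assoc,
        ← mul_assoc (ENNReal.ofReal ‖x‖ ^ a),
        ← ENNReal.rpow_add _ _ (by simpa using hx) (by simp), add_neg_cancel,
        ENNReal.rpow_zero, one_mul, mul_comm]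
    · exact (hGm.comp (by fun_prop : Measurable fun z :
        sphere (0 : EuclideanSpace ℝ (Fin (m + 1))) 1 × EuclideanSpace ℝ (Fin (m + 1)) =>
          ((z.1 : EuclideanSpace ℝ (Fin (m + 1))), z.2))).aemeasurable
  have hω0 : 0 < ω₀ := by
    have h1 : ((m + 1 : ℝ) / p - (m + 1) + 1) / 2 = s - m / 2 := by rw [h2s]; ring
    rw [hω, h1]; positivity
  calc _ ≤ ∫⁻ θ : sphere (0 : EuclideanSpace ℝ (Fin (m + 1))) 1,
        ENNReal.ofReal C ^ (p - 1) * ∫⁻ x, G θ x ∂volume ∂(sphMeasure (m + 1)) :=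
        lintegral_mono step1
    _ = (σ Set.univ)⁻¹ * (ENNReal.ofReal C ^ (p - 1) *
        (ENNReal.ofReal (2 * π ^ (m / 2 : ℝ) * Real.Gamma ((1 - a) / 2) /
          Real.Gamma ((m + 1 - a) / 2)) * volume S)) := by
        rw [← step2, sphMeasure, lintegral_smul_measure, smul_eq_mul,
          lintegral_const_mul' _ _ (ENNReal.rpow_ne_top_of_nonneg (by linarith) (by simp))]
    _ = ENNReal.ofReal ω₀ ^ p * volume S := by
        rw [← mul_assoc, ← mul_assoc, hσu, ← ENNReal.ofReal_inv_of_pos (by positivity),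
          ENNReal.ofReal_rpow_of_pos hC0, ENNReal.ofReal_rpow_of_pos hω0,
          ← ENNReal.ofReal_mul (by positivity), ← ENNReal.ofReal_mul (by positivity)]
        congr 2
        have h1 : ((m + 1 : ℝ) / p - (m + 1) + 1) / 2 = s - m / 2 := by rw [h2s]; ring
        have h2 : (1 - a) / 2 = s - m / 2 := by rw [ha, h2s]; ring
        have h3 : (m + 1 - a) / 2 = s := by rw [ha, h2s]; ring
        rw [hω, h1, h2, h3, hC]
        set A := Real.Gamma (s - m / 2)
        set B := Real.Gamma s
        set P := Real.Gamma (1 / 2)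
        set Q := Real.Gamma ((m + 1) / 2)
        have e1 : (π ^ ((m : ℝ) * (1 - 1 / p) / 2) * (Q / P) ^ (1 / p) * A / B) ^ p =
            π ^ ((m : ℝ) * (p - 1) / 2) * (Q / P) * (A / B) ^ (p - 1) * (A / B) := by
          rw [mul_div_assoc, mul_rpow (by positivity) (by positivity),
            mul_rpow (by positivity) (by positivity), ← rpow_mul pi_pos.le,
            ← rpow_mul (by positivity), one_div_mul_cancel hp0.ne', rpow_one, mul_assoc _ _ (A / B),
            ← rpow_add_one (by positivity)]
          rw [show (m : ℝ) * (1 - 1 / p) / 2 * p = m * (p - 1) / 2 by field_simp,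
            show p - 1 + 1 = p by ring]
        have e2 : (π ^ (m / 2 : ℝ) * A / B) ^ (p - 1) =
            π ^ ((m : ℝ) * (p - 1) / 2) * (A / B) ^ (p - 1) := by
          rw [mul_div_assoc, mul_rpow (by positivity) (by positivity), ← rpow_mul pi_pos.le]
          congr 2
          ring
        rw [e1, e2]
        field_simp
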